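/- arXiv:2011.13977 — 2 statements merged into one kernel-verified Lean document; each statement's English description precedes it below -/
import Mathlib

section
/- Let I be an instance with n ≥ 2 agents and n objects, and let p = (p_1,...,p_n) be given by p_j = 4n^{2n} − 2n^{j−1} for all j ∈ [n]. Then a matching μ of G_I is fair if and only if μ is a priority-p matching. -/
open Finset
open scoped Classical

/-- A one-sided matching instance with `n` agents and `n` objects.  Agent `i` has a
nonempty acceptable set `accept i` and a weak order `pref i` on it
(`pref i h h'` means agent `i` weakly prefers object `h` to object `h'`). -/
structure OSMInstance (n : ℕ) where
  accept : Fin n → Finset (Fin n)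
  accept_nonempty : ∀ i, (accept i).Nonempty
  pref : Fin n → Fin n → Fin n → Prop
  pref_refl : ∀ i h, h ∈ accept i → pref i h h
  pref_trans : ∀ i h₁ h₂ h₃, h₁ ∈ accept i → h₂ ∈ accept i → h₃ ∈ accept i →
    pref i h₁ h₂ → pref i h₂ h₃ → pref i h₁ h₃
  pref_total : ∀ i h₁ h₂, h₁ ∈ accept i → h₂ ∈ accept i → pref i h₁ h₂ ∨ pref i h₂ h₁

namespace OSMInstance

variable {n : ℕ}

/-- Agent `i` strictly prefers object `h` to object `h'`. -/
def strictPref (I : OSMInstance n) (i h h' : Fin n) : Prop :=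
  I.pref i h h' ∧ ¬ I.pref i h' h

/-- The rank of the edge `(i, h)` of `G_I`: one plus the number of acceptable objects
that agent `i` strictly prefers to `h`. -/
noncomputable def edgeRank (I : OSMInstance n) (e : Fin n × Fin n) : ℕ :=
  ((I.accept e.1).filter (fun h' => I.strictPref e.1 h' e.2)).card + 1

/-- A matching of `G_I`: a set of acceptable (agent, object) pairs in which every agent
and every object occurs at most once. -/
def IsMatching (I : OSMInstance n) (μ : Finset (Fin n × Fin n)) : Prop :=
  (∀ e ∈ μ, e.2 ∈ I.accept e.1) ∧
  (∀ e ∈ μ, ∀ e' ∈ μ, e.1 = e'.1 → e = e') ∧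
  (∀ e ∈ μ, ∀ e' ∈ μ, e.2 = e'.2 → e = e')

/-- Total weight of a set of edges under the edge weights `w`. -/
def weightSum (w : Fin n × Fin n → ℝ) (μ : Finset (Fin n × Fin n)) : ℝ :=
  ∑ e ∈ μ, w e

/-- Social welfare of the set of edges `μ` under the valuation profile `v`. -/
def SW (_I : OSMInstance n) (v : Fin n → Fin n → ℝ) (μ : Finset (Fin n × Fin n)) : ℝ :=
  ∑ e ∈ μ, v e.1 e.2

/-- `μ` is a maximum-weight matching of `G_I` with respect to edge weights `w`. -/
def IsMaxWeightMatching (I : OSMInstance n) (w : Fin n × Fin n → ℝ)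
    (μ : Finset (Fin n × Fin n)) : Prop :=
  I.IsMatching μ ∧ ∀ μ', I.IsMatching μ' → weightSum w μ' ≤ weightSum w μ

/-- `μ` is a priority-`p` matching: a maximum-weight matching when every rank-`r` edge
gets weight `p r`. -/
noncomputable def IsPriorityMatching (I : OSMInstance n) (p : ℕ → ℝ)
    (μ : Finset (Fin n × Fin n)) : Prop :=
  I.IsMaxWeightMatching (fun e => p (I.edgeRank e)) μ

/-- `v` is a valuation profile consistent with the instance: values lie in `[0,1]`,
unacceptable objects have value `0`, and on acceptable objects the values represent
the weak order. -/
def Consistent (I : OSMInstance n) (v : Fin n → Fin n → ℝ) : Prop :=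
  (∀ i h, 0 ≤ v i h ∧ v i h ≤ 1) ∧
  (∀ i h, h ∉ I.accept i → v i h = 0) ∧
  (∀ i h h', h ∈ I.accept i → h' ∈ I.accept i → (I.pref i h h' ↔ v i h' ≤ v i h))

/-- Unit-sum valuations: each agent's values over acceptable objects sum to `1`. -/
def UnitSum (I : OSMInstance n) (v : Fin n → Fin n → ℝ) : Prop :=
  ∀ i, ∑ h ∈ I.accept i, v i h = 1

/-- Unit-range valuations: each agent values some acceptable object `1`, some
acceptable object `0`, and has two non-equivalent acceptable objects. -/
def UnitRange (I : OSMInstance n) (v : Fin n → Fin n → ℝ) : Prop :=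
  ∀ i, (∃ h ∈ I.accept i, v i h = 1) ∧ (∃ h ∈ I.accept i, v i h = 0) ∧
    ∃ h ∈ I.accept i, ∃ h' ∈ I.accept i, I.strictPref i h h'

/-- Agent `i` is unmatched in `μ`. -/
def Unmatched (_I : OSMInstance n) (μ : Finset (Fin n × Fin n)) (i : Fin n) : Prop :=
  ∀ h, (i, h) ∉ μ

/-- Agent `i` weakly prefers their allocation in `μ'` to their allocation in `μ`
(being unmatched is strictly worse than receiving any acceptable object). -/
def WeakImprove (I : OSMInstance n) (μ' μ : Finset (Fin n × Fin n)) (i : Fin n) : Prop :=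
  I.Unmatched μ i ∨ ∃ h h', (i, h) ∈ μ ∧ (i, h') ∈ μ' ∧ I.pref i h' h

/-- Agent `i` strictly prefers their allocation in `μ'` to their allocation in `μ`. -/
def StrictImprove (I : OSMInstance n) (μ' μ : Finset (Fin n × Fin n)) (i : Fin n) : Prop :=
  (I.Unmatched μ i ∧ ∃ h', (i, h') ∈ μ') ∨
    ∃ h h', (i, h) ∈ μ ∧ (i, h') ∈ μ' ∧ I.strictPref i h' h

/-- `μ` is a Pareto optimal matching of `G_I`. -/
def ParetoOptimal (I : OSMInstance n) (μ : Finset (Fin n × Fin n)) : Prop :=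
  I.IsMatching μ ∧
    ¬ ∃ μ', I.IsMatching μ' ∧ (∀ i, I.WeakImprove μ' μ i) ∧ ∃ i, I.StrictImprove μ' μ i

/-- `sig I μ r` is the number of rank-`r` edges of `μ` (as an integer). -/
noncomputable def sig (I : OSMInstance n) (μ : Finset (Fin n × Fin n)) (r : ℕ) : ℤ :=
  ((μ.filter (fun e => I.edgeRank e = r)).card : ℤ)

end OSMInstance

/-- Lexicographic comparison `f ≤ g` of the length-`len` tuples `(f 0, …, f (len-1))`
and `(g 0, …, g (len-1))`. -/
def LexLe (len : ℕ) (f g : ℕ → ℤ) : Prop :=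
  (∀ j < len, f j = g j) ∨ ∃ j < len, (∀ i < j, f i = g i) ∧ f j < g j

namespace OSMInstance

variable {n : ℕ}

/-- `μ` is a rank-maximal matching: it lexicographically maximizes `(s_1, …, s_n)`. -/
noncomputable def RankMaximal (I : OSMInstance n) (μ : Finset (Fin n × Fin n)) : Prop :=
  I.IsMatching μ ∧ ∀ μ', I.IsMatching μ' →
    LexLe n (fun j => I.sig μ' (j + 1)) (fun j => I.sig μ (j + 1))

/-- `μ` is a max-cardinality rank-maximal matching: it lexicographically maximizes
`(Σ_i s_i, s_1, …, s_n)`. -/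
noncomputable def MaxCardRankMaximal (I : OSMInstance n) (μ : Finset (Fin n × Fin n)) : Prop :=
  I.IsMatching μ ∧ ∀ μ', I.IsMatching μ' →
    LexLe (n + 1) (fun j => if j = 0 then (μ'.card : ℤ) else I.sig μ' j)
      (fun j => if j = 0 then (μ.card : ℤ) else I.sig μ j)

/-- `μ` is a fair matching: it lexicographically maximizes
`(Σ_i s_i, -s_n, -s_(n-1), …, -s_1)`. -/
noncomputable def FairMatching (I : OSMInstance n) (μ : Finset (Fin n × Fin n)) : Prop :=
  I.IsMatching μ ∧ ∀ μ', I.IsMatching μ' →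
    LexLe (n + 1) (fun j => if j = 0 then (μ'.card : ℤ) else -I.sig μ' (n + 1 - j))
      (fun j => if j = 0 then (μ.card : ℤ) else -I.sig μ (n + 1 - j))

end OSMInstance

/-- The priority vector for rank-maximal matchings: a rank-`r` edge gets weight
`n ^ (2 * (n - r + 1))`. -/
noncomputable def pRankMaximal (n : ℕ) : ℕ → ℝ :=
  fun r => (n : ℝ) ^ (2 * (n - r + 1))

/-- The priority vector for max-cardinality rank-maximal matchings: a rank-`r` edge gets
weight `n ^ (2 * n) + n ^ (2 * (n - r))`. -/
noncomputable def pMaxCardRankMaximal (n : ℕ) : ℕ → ℝ :=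
  fun r => (n : ℝ) ^ (2 * n) + (n : ℝ) ^ (2 * (n - r))

/-- The priority vector for fair matchings: a rank-`r` edge gets weight
`4 * n ^ (2 * n) - 2 * n ^ (r - 1)`. -/
noncomputable def pFairVec (n : ℕ) : ℕ → ℝ :=
  fun r => 4 * (n : ℝ) ^ (2 * n) - 2 * (n : ℝ) ^ (r - 1)

/-- The set `𝕡` of the three priority vectors of interest. -/
noncomputable def PrioritySet (n : ℕ) : Set (ℕ → ℝ) :=
  {pRankMaximal n, pMaxCardRankMaximal n, pFairVec n}

/-- The four matching properties considered: Pareto optimal, rank-maximal,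
max-cardinality rank-maximal, and fair. -/
inductive MatchProp where
  | po | rm | mcrm | fair

/-- `μ` satisfies the property `X` with respect to the instance `I`. -/
noncomputable def SatisfiesProp {n : ℕ} (X : MatchProp) (I : OSMInstance n)
    (μ : Finset (Fin n × Fin n)) : Prop :=
  match X with
  | .po => I.ParetoOptimal μ
  | .rm => I.RankMaximal μ
  | .mcrm => I.MaxCardRankMaximal μ
  | .fair => I.FairMatching μ

/-- Two digit sequences with the same digit sum, at most the base `n`: the one whose
topmost differing digit is smaller has the smaller value, although the digit `n` itself
is allowed. -/
theorem sum_mul_pow_lt_of_top_digit_lt {n : ℕ} (hn : 2 ≤ n) {a b : ℕ → ℕ}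
    (hab : ∑ r ∈ range n, a r = ∑ r ∈ range n, b r) (ha : ∑ r ∈ range n, a r ≤ n)
    {j : ℕ} (hj : j < n) (hlt : a j < b j) (htop : ∀ r, j < r → r < n → a r = b r) :
    ∑ r ∈ range n, a r * n ^ r < ∑ r ∈ range n, b r * n ^ r := by
  have split (f : ℕ → ℕ) : ∑ r ∈ range n, f r =
      ∑ r ∈ range j, f r + f j + ∑ r ∈ Ico (j + 1) n, f r := by
    rw [← sum_range_succ, sum_range_add_sum_Ico _ hj]
  have htop_sum : ∑ r ∈ Ico (j + 1) n, a r = ∑ r ∈ Ico (j + 1) n, b r :=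
    sum_congr rfl fun r hr => by
      rw [mem_Ico] at hr
      exact htop r hr.1 hr.2
  have htop_val : ∑ r ∈ Ico (j + 1) n, a r * n ^ r = ∑ r ∈ Ico (j + 1) n, b r * n ^ r :=
    sum_congr rfl fun r hr => by
      rw [mem_Ico] at hr
      rw [htop r hr.1 hr.2]
  rw [split a] at ha
  rw [split a, split b, htop_sum] at hab
  rw [split, split, htop_val]
  refine Nat.add_lt_add_right ?_ _
  cases j with
  | zero => simp at hab; omega
  | succ i =>
    have upper : ∑ r ∈ range (i + 1), a r * n ^ r ≤ (∑ r ∈ range (i + 1), a r) * n ^ i := by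
      rw [sum_mul]
      refine sum_le_sum fun r hr => Nat.mul_le_mul_left _ (Nat.pow_le_pow_right (by omega) ?_)
      rw [mem_range] at hr
      omega
    have lower : ∑ r ∈ range (i + 1), b r ≤ ∑ r ∈ range (i + 1), b r * n ^ r :=
      sum_le_sum fun r _ => Nat.le_mul_of_pos_right _ (Nat.pow_pos (by omega))
    generalize ∑ r ∈ range (i + 1), a r * n ^ r = va at *
    generalize ∑ r ∈ range (i + 1), b r * n ^ r = vb at *
    generalize ∑ r ∈ range (i + 1), a r = A at *
    generalize ∑ r ∈ range (i + 1), b r = B at *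
    generalize a (i + 1) = x at *
    generalize b (i + 1) = y at *
    have hN : 0 < n ^ i := Nat.pow_pos (by omega)
    rw [pow_succ']
    generalize n ^ i = N at *
    obtain ⟨d, rfl⟩ : ∃ d, y = x + 1 + d := ⟨y - (x + 1), by omega⟩
    have hpos : 0 < n * N := Nat.mul_pos (by omega) hN
    have expand : (x + 1 + d) * (n * N) = x * (n * N) + n * N + d * (n * N) := by ring
    rw [expand]
    have hA : A ≤ n := by omega
    rcases hA.lt_or_eq with hA | rfl
    · have : A * N < n * N := Nat.mul_lt_mul_of_pos_right hA hN
      omega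
    · rcases Nat.eq_zero_or_pos B with hB | hB
      · have : 0 < d * (A * N) := Nat.mul_pos (by omega) hpos
        omega
      · omega

namespace OSMInstance

variable {n : ℕ} {I : OSMInstance n} {μ μ' : Finset (Fin n × Fin n)}

theorem edgeRank_le (I : OSMInstance n) (e : Fin n × Fin n) : I.edgeRank e ≤ n := by
  have hss : (I.accept e.1).filter (fun h' => I.strictPref e.1 h' e.2) ⊂ univ := by
    refine (ssubset_iff_of_subset (subset_univ _)).2 ⟨e.2, mem_univ _, fun hmem => ?_⟩
    have hstrict := (mem_filter.1 hmem).2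
    exact hstrict.2 hstrict.1
  simpa [edgeRank] using card_lt_card hss

theorem IsMatching.card_le (hμ : I.IsMatching μ) : μ.card ≤ n := by
  simpa using card_le_card_of_injOn (t := univ) Prod.fst (by simp)
    fun e he e' he' h => hμ.2.1 e he e' he' h

/-- The number of edges of `μ` of rank `r + 1`. -/
noncomputable def rankCount (I : OSMInstance n) (μ : Finset (Fin n × Fin n)) (r : ℕ) : ℕ :=
  (μ.filter fun e => I.edgeRank e - 1 = r).card

theorem sig_succ (r : ℕ) : I.sig μ (r + 1) = I.rankCount μ r := by
  simp only [sig, rankCount, edgeRank, Nat.add_sub_cancel, Nat.add_right_cancel_iff]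

theorem edgeRank_sub_one_mem_range (I : OSMInstance n) (e : Fin n × Fin n) :
    I.edgeRank e - 1 ∈ range n := by
  have hle := I.edgeRank_le e
  have hpos : 0 < I.edgeRank e := Nat.succ_pos _
  rw [mem_range]
  omega

theorem sum_rankCount (I : OSMInstance n) (μ : Finset (Fin n × Fin n)) :
    ∑ r ∈ range n, I.rankCount μ r = μ.card :=
  (card_eq_sum_card_fiberwise fun e _ => I.edgeRank_sub_one_mem_range e).symm

theorem weightSum_pFairVec (I : OSMInstance n) (μ : Finset (Fin n × Fin n)) :
    weightSum (fun e => pFairVec n (I.edgeRank e)) μ =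
      4 * (n : ℝ) ^ (2 * n) * μ.card
        - 2 * ((∑ r ∈ range n, I.rankCount μ r * n ^ r : ℕ) : ℝ) := by
  have hval : ∑ e ∈ μ, (n : ℝ) ^ (I.edgeRank e - 1) =
      ((∑ r ∈ range n, I.rankCount μ r * n ^ r : ℕ) : ℝ) := by
    rw [← sum_fiberwise_of_maps_to fun e _ => I.edgeRank_sub_one_mem_range e]
    push_cast
    refine sum_congr rfl fun r _ => ?_
    rw [sum_congr rfl fun e he => by rw [(mem_filter.1 he).2], sum_const, nsmul_eq_mul,
      rankCount]
  rw [weightSum, ← hval]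
  simp only [pFairVec, sum_sub_distrib, sum_const, nsmul_eq_mul, ← mul_sum]
  ring

theorem IsMatching.sum_rankCount_mul_pow_le (hn : 2 ≤ n) (hμ : I.IsMatching μ) :
    ∑ r ∈ range n, I.rankCount μ r * n ^ r ≤ n ^ (2 * n) := by
  calc ∑ r ∈ range n, I.rankCount μ r * n ^ r
      ≤ ∑ r ∈ range n, I.rankCount μ r * n ^ (n - 1) :=
        sum_le_sum fun r hr => Nat.mul_le_mul_left _
          (Nat.pow_le_pow_right (by omega) (Nat.le_sub_one_of_lt (mem_range.1 hr)))
    _ = μ.card * n ^ (n - 1) := by rw [← sum_mul, sum_rankCount]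
    _ ≤ n * n ^ (n - 1) := Nat.mul_le_mul_right _ hμ.card_le
    _ = n ^ (n - 1 + 1) := (pow_succ' _ _).symm
    _ ≤ n ^ (2 * n) := Nat.pow_le_pow_right (by omega) (by omega)

/-- The tuple `(Σ_i s_i, -s_n, …, -s_1)`, which fair matchings maximize lexicographically. -/
noncomputable def fairTuple (I : OSMInstance n) (μ : Finset (Fin n × Fin n)) (j : ℕ) : ℤ :=
  if j = 0 then (μ.card : ℤ) else -I.sig μ (n + 1 - j)

theorem card_eq_of_fairTuple_zero (h : I.fairTuple μ' 0 = I.fairTuple μ 0) :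
    μ'.card = μ.card := by
  simpa [fairTuple] using h

theorem fairTuple_sub {r : ℕ} (hr : r < n) : I.fairTuple μ (n - r) = -(I.rankCount μ r : ℤ) := by
  rw [fairTuple, if_neg (by omega), ← sig_succ]
  congr 2
  omega

theorem weightSum_eq_of_fairTuple_eq
    (h : ∀ j < n + 1, I.fairTuple μ' j = I.fairTuple μ j) :
    weightSum (fun e => pFairVec n (I.edgeRank e)) μ' =
      weightSum (fun e => pFairVec n (I.edgeRank e)) μ := by
  rw [weightSum_pFairVec, weightSum_pFairVec,
    card_eq_of_fairTuple_zero (h 0 (by omega))]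
  congr 3
  refine sum_congr rfl fun r hr => ?_
  have hr := mem_range.1 hr
  have heq := h (n - r) (by omega)
  rw [fairTuple_sub hr, fairTuple_sub hr] at heq
  rw [show I.rankCount μ' r = I.rankCount μ r by omega]

theorem weightSum_lt_of_fairTuple_lt (hn : 2 ≤ n) (hμ : I.IsMatching μ)
    {j : ℕ} (hj : j < n + 1)
    (heq : ∀ i < j, I.fairTuple μ' i = I.fairTuple μ i)
    (hlt : I.fairTuple μ' j < I.fairTuple μ j) :
    weightSum (fun e => pFairVec n (I.edgeRank e)) μ' <
      weightSum (fun e => pFairVec n (I.edgeRank e)) μ := by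
  rw [weightSum_pFairVec, weightSum_pFairVec]
  rcases Nat.eq_zero_or_pos j with rfl | hj0
  · have hcard : (μ'.card : ℝ) + 1 ≤ μ.card := by
      have : μ'.card < μ.card := by simpa [fairTuple] using hlt
      exact_mod_cast this
    have hle : ((∑ r ∈ range n, I.rankCount μ r * n ^ r : ℕ) : ℝ) ≤ (n : ℝ) ^ (2 * n) := by
      exact_mod_cast hμ.sum_rankCount_mul_pow_le hn
    have hnonneg : (0 : ℝ) ≤ ((∑ r ∈ range n, I.rankCount μ' r * n ^ r : ℕ) : ℝ) :=
      Nat.cast_nonneg _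
    have hpos : (0 : ℝ) < (n : ℝ) ^ (2 * n) := by
      have : 0 < n := by omega
      positivity
    have := mul_le_mul_of_nonneg_left hcard hpos.le
    linarith
  · have hcard := card_eq_of_fairTuple_zero (heq 0 hj0)
    have hval : ∑ r ∈ range n, I.rankCount μ r * n ^ r <
        ∑ r ∈ range n, I.rankCount μ' r * n ^ r := by
      refine sum_mul_pow_lt_of_top_digit_lt (j := n - j) hn ?_ ?_ (by omega) ?_ ?_
      · rw [sum_rankCount, sum_rankCount, hcard]
      · rw [sum_rankCount]
        exact hμ.card_le
      · rw [show j = n - (n - j) by omega, fairTuple_sub (by omega),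
          fairTuple_sub (by omega)] at hlt
        omega
      · intro r hr hrn
        have hr' := heq (n - r) (by omega)
        rw [fairTuple_sub hrn, fairTuple_sub hrn] at hr'
        omega
    rw [hcard]
    have : ((∑ r ∈ range n, I.rankCount μ r * n ^ r : ℕ) : ℝ) <
        ((∑ r ∈ range n, I.rankCount μ' r * n ^ r : ℕ) : ℝ) := by exact_mod_cast hval
    linarith

end OSMInstance

theorem LexLe.or_exists_lt (len : ℕ) (f g : ℕ → ℤ) :
    LexLe len f g ∨ ∃ j < len, (∀ i < j, g i = f i) ∧ g j < f j := by
  by_cases h : ∀ j < len, f j = g j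
  · exact Or.inl (Or.inl h)
  · push Not at h
    have hmin (i : ℕ) (hi : i < Nat.find h) : f i = g i := by
      by_contra hne
      exact Nat.find_min h hi ⟨hi.trans (Nat.find_spec h).1, hne⟩
    rcases lt_or_gt_of_ne (Nat.find_spec h).2 with hlt | hlt
    · exact Or.inl (Or.inr ⟨_, (Nat.find_spec h).1, hmin, hlt⟩)
    · exact Or.inr ⟨_, (Nat.find_spec h).1, fun i hi => (hmin i hi).symm, hlt⟩

/-- a matching is fair iff it is a priority-`p` matching for
`p_j = 4n^(2n) - 2n^(j-1)`. -/
theorem fair_iff_priority {n : ℕ} (hn : 2 ≤ n) (I : OSMInstance n)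
    (μ : Finset (Fin n × Fin n)) (hμ : I.IsMatching μ) :
    I.FairMatching μ ↔ I.IsPriorityMatching (pFairVec n) μ := by
  constructor
  · rintro ⟨-, hfair⟩
    refine ⟨hμ, fun μ' hμ' => ?_⟩
    rcases hfair μ' hμ' with heq | ⟨j, hj, heq, hlt⟩
    · exact (OSMInstance.weightSum_eq_of_fairTuple_eq heq).le
    · exact (OSMInstance.weightSum_lt_of_fairTuple_lt hn hμ hj heq hlt).le
  · rintro ⟨-, hmax⟩
    refine ⟨hμ, fun μ' hμ' => ?_⟩
    rcases LexLe.or_exists_lt (n + 1) (I.fairTuple μ') (I.fairTuple μ) with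
      hle | ⟨j, hj, heq, hlt⟩
    · exact hle
    · exact absurd (hmax μ' hμ')
        (OSMInstance.weightSum_lt_of_fairTuple_lt hn hμ' hj heq hlt).not_ge
end

section
/- Let 0 < ε ≤ 2, let I be an instance with n agents and n objects, and let v be a valuation profile consistent with I that is unit-sum or unit-range. Set c = ⌈log(n²·(1/ε)) / log(1+ε/2)⌉ and t_k = (2/(2+ε))^k for k = 0,1,...,c (so t_0 = 1); for an edge e = (a_i, h_j) of G_I define value'(e) = t_k if there is k ∈ {1,...,c} with t_k ≤ v_i(h_j) and (k = 1 or v_i(h_j) < t_{k−1}), and value'(e) = 0 if v_i(h_j) < t_c. Let μ' be a maximum-weight matching of G_I with respect to the weights w_e = value'(e). Then every Pareto optimal matching μ with SW(μ | v) ≥ SW(μ' | v) satisfies SW(μ* | v) ≤ (1+ε)·SW(μ | v), where μ* is a Pareto optimal matching of maximum social welfare under v. -/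
open Finset
open scoped Classical

namespace OSMInstance

variable {n : ℕ}

theorem IsMatching.card_le_s5 {I : OSMInstance n} {M : Finset (Fin n × Fin n)}
    (hM : I.IsMatching M) : M.card ≤ n := by
  have h := Finset.card_le_card_of_injOn (s := M) (t := (Finset.univ : Finset (Fin n))) Prod.fst
    (fun _ _ => Finset.mem_coe.2 (Finset.mem_univ _))
    (fun e he e' he' h => hM.2.1 e he e' he' h)
  simpa using h

/-- Under unit-sum valuations the `n` cyclic shifts have total welfare `n`, so one of them
has welfare at least `1`. -/
theorem exists_matching_one_le_SW_of_unitSum (hn : 0 < n) (I : OSMInstance n)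
    {v : Fin n → Fin n → ℝ} (hv : I.Consistent v) (hsum : I.UnitSum v) :
    ∃ M, I.IsMatching M ∧ 1 ≤ I.SW v M := by
  have : NeZero n := ⟨hn.ne'⟩
  have htotal : ∑ s : Fin n, ∑ i : Fin n, v i (i + s) = n := by
    rw [Finset.sum_comm]
    have hrow : ∀ i : Fin n, ∑ s : Fin n, v i (i + s) = 1 := by
      intro i
      rw [← hsum i]
      refine (Equiv.sum_comp (Equiv.addLeft i) (v i)).trans ?_
      exact (Finset.sum_subset (Finset.subset_univ _) fun h _ hh => hv.2.1 i h hh).symm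
    simp [hrow]
  obtain ⟨s, -, hs⟩ : ∃ s ∈ (Finset.univ : Finset (Fin n)), (1 : ℝ) ≤ ∑ i, v i (i + s) := by
    apply Finset.exists_le_of_sum_le Finset.univ_nonempty
    rw [htotal]
    simp
  have hinj : Function.Injective (fun i : Fin n => (i, i + s)) :=
    fun i j hij => congrArg Prod.fst hij
  refine ⟨(Finset.univ.filter fun i => i + s ∈ I.accept i).image fun i => (i, i + s),
    ⟨?_, ?_, ?_⟩, ?_⟩
  · intro e he
    obtain ⟨i, hi, rfl⟩ := Finset.mem_image.1 he
    exact (Finset.mem_filter.1 hi).2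
  · intro e he e' he' h
    obtain ⟨i, -, rfl⟩ := Finset.mem_image.1 he
    obtain ⟨j, -, rfl⟩ := Finset.mem_image.1 he'
    obtain rfl : i = j := h
    rfl
  · intro e he e' he' h
    obtain ⟨i, -, rfl⟩ := Finset.mem_image.1 he
    obtain ⟨j, -, rfl⟩ := Finset.mem_image.1 he'
    obtain rfl : i = j := add_right_cancel h
    rfl
  · unfold SW
    rw [Finset.sum_image fun i _ j _ hij => hinj hij]
    refine hs.trans (le_of_eq ?_)
    refine (Finset.sum_subset (Finset.subset_univ _) fun i _ hi => hv.2.1 i _ ?_).symm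
    simpa using hi

theorem exists_matching_one_le_SW_of_unitRange (hn : 0 < n) (I : OSMInstance n)
    {v : Fin n → Fin n → ℝ} (hrange : I.UnitRange v) :
    ∃ M, I.IsMatching M ∧ 1 ≤ I.SW v M := by
  obtain ⟨⟨h, hh, hval⟩, -⟩ := hrange ⟨0, hn⟩
  refine ⟨{(⟨0, hn⟩, h)}, ⟨?_, ?_, ?_⟩, ?_⟩ <;> simp [SW, hh, hval]

end OSMInstance

/-- The threshold with index `⌈log (n² / ε) / log (1 + ε / 2)⌉` is at most `ε / n²`. -/
theorem sq_mul_threshold_le {n : ℕ} (hn : 0 < n) {ε : ℝ} (hε : 0 < ε) :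
    (n : ℝ) ^ 2 *
      (2 / (2 + ε)) ^ ⌈Real.log ((n : ℝ) ^ 2 * (1 / ε)) / Real.log (1 + ε / 2)⌉₊ ≤ ε := by
  set c := ⌈Real.log ((n : ℝ) ^ 2 * (1 / ε)) / Real.log (1 + ε / 2)⌉₊
  have hN : (0 : ℝ) < n := by exact_mod_cast hn
  have hlog : 0 < Real.log (1 + ε / 2) := Real.log_pos (by linarith)
  have hle : Real.log ((n : ℝ) ^ 2 * (1 / ε)) ≤ c * Real.log (1 + ε / 2) :=
    (div_le_iff₀ hlog).1 (Nat.le_ceil _)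
  have hpow : (n : ℝ) ^ 2 * (1 / ε) ≤ (1 + ε / 2) ^ c := by
    rw [← Real.log_pow] at hle
    exact (Real.log_le_log_iff (by positivity) (by positivity)).1 hle
  have hbase : (2 / (2 + ε)) = (1 + ε / 2)⁻¹ := by
    field_simp
  rw [hbase, inv_pow, ← div_eq_mul_inv, div_le_iff₀ (by positivity)]
  rw [mul_one_div, div_le_iff₀ hε] at hpow
  linarith

/-- Rounding to the thresholds `(2 / (2 + ε)) ^ k` loses at most a factor `1 + ε / 2`. -/
theorem le_mul_threshold {ε x : ℝ} (hε : 0 < ε) (hx : x ≤ 1) {k : ℕ} (hk : 1 ≤ k)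
    (h : k = 1 ∨ x < (2 / (2 + ε)) ^ (k - 1)) : x ≤ (1 + ε / 2) * (2 / (2 + ε)) ^ k := by
  obtain ⟨j, rfl⟩ : ∃ j, k = j + 1 := ⟨k - 1, by omega⟩
  have heq : (1 + ε / 2) * (2 / (2 + ε)) ^ (j + 1) = (2 / (2 + ε)) ^ j := by
    rw [pow_succ]
    field_simp
  rw [heq]
  rcases h with h | h
  · obtain rfl : j = 0 := by omega
    simpa using hx
  · simpa using h.le

namespace OSMInstance

variable {n : ℕ}

/-- A matching of welfare at least `1` has welfare at most `1 + ε` times that of a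
maximum-weight matching for the rounded weights. -/
theorem SW_le_of_isMaxWeightMatching (hn : 0 < n) (I : OSMInstance n)
    {ε : ℝ} (hε : 0 < ε) (hε2 : ε ≤ 2)
    {v : Fin n → Fin n → ℝ} (hv : I.Consistent v) {c : ℕ}
    (hc : (n : ℝ) ^ 2 * (2 / (2 + ε)) ^ c ≤ ε)
    {w : Fin n × Fin n → ℝ}
    (hw : ∀ i h, h ∈ I.accept i →
      (∃ k, 1 ≤ k ∧ k ≤ c ∧ (2 / (2 + ε)) ^ k ≤ v i h ∧
        (k = 1 ∨ v i h < (2 / (2 + ε)) ^ (k - 1)) ∧ w (i, h) = (2 / (2 + ε)) ^ k) ∨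
      (v i h < (2 / (2 + ε)) ^ c ∧ w (i, h) = 0))
    {μ' : Finset (Fin n × Fin n)} (hμ' : I.IsMaxWeightMatching w μ')
    {M : Finset (Fin n × Fin n)} (hM : I.IsMatching M) (hone : 1 ≤ I.SW v M) :
    I.SW v M ≤ (1 + ε) * I.SW v μ' := by
  set T : ℝ := (2 / (2 + ε)) ^ c
  have hq0 : 0 < 2 / (2 + ε) := by positivity
  have hq1 : 2 / (2 + ε) ≤ 1 := by rw [div_le_one (by positivity)]; linarith
  have hT0 : 0 < T := pow_pos hq0 c
  have hT1 : T ≤ 1 := pow_le_one₀ hq0.le hq1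
  have hN : (1 : ℝ) ≤ n := by exact_mod_cast hn
  have hw0 : ∀ e : Fin n × Fin n, e.2 ∈ I.accept e.1 → 0 ≤ w e := by
    rintro ⟨i, h⟩ he
    rcases hw i h he with ⟨k, -, -, -, -, hk⟩ | ⟨-, hk⟩ <;> rw [hk]
    positivity
  have hwv : ∀ e : Fin n × Fin n, e.2 ∈ I.accept e.1 → w e ≤ v e.1 e.2 := by
    rintro ⟨i, h⟩ he
    rcases hw i h he with ⟨k, -, -, hk, -, hk'⟩ | ⟨-, hk⟩
    · rwa [hk']
    · rw [hk]
      exact (hv.1 i h).1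
  have hvw : ∀ e : Fin n × Fin n, e.2 ∈ I.accept e.1 → T ≤ v e.1 e.2 →
      v e.1 e.2 ≤ (1 + ε / 2) * w e := by
    rintro ⟨i, h⟩ he hTv
    rcases hw i h he with ⟨k, hk1, -, -, hk, hk'⟩ | ⟨hlt, -⟩
    · rw [hk']
      exact le_mul_threshold hε (hv.1 i h).2 hk1 hk
    · exact absurd hlt (not_lt.2 hTv)
  set B := M.filter fun e => T ≤ v e.1 e.2
  set L := M.filter fun e => ¬ T ≤ v e.1 e.2
  have hsplit : ∑ e ∈ B, v e.1 e.2 + ∑ e ∈ L, v e.1 e.2 = I.SW v M :=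
    Finset.sum_filter_add_sum_filter_not M _ _
  have hcard : B.card + L.card ≤ n := by
    have : B.card + L.card = M.card := Finset.card_filter_add_card_filter_not _
    exact this ▸ hM.card_le_s5
  have hBmem : ∀ e ∈ B, e.2 ∈ I.accept e.1 := fun e he => hM.1 e (Finset.mem_filter.1 he).1
  have hsmall : ∑ e ∈ L, v e.1 e.2 ≤ L.card * T := by
    rw [← nsmul_eq_mul]
    exact Finset.sum_le_card_nsmul _ _ _ fun e he => (not_le.1 (Finset.mem_filter.1 he).2).le
  have hwB : ∑ e ∈ B, w e ≤ I.SW v μ' :=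
    calc ∑ e ∈ B, w e ≤ ∑ e ∈ M, w e :=
          Finset.sum_le_sum_of_subset_of_nonneg (Finset.filter_subset _ _)
            fun e he _ => hw0 e (hM.1 e he)
      _ ≤ ∑ e ∈ μ', w e := hμ'.2 M hM
      _ ≤ I.SW v μ' := Finset.sum_le_sum fun e he => hwv e (hμ'.1.1 e he)
  have hlarge : ∑ e ∈ B, v e.1 e.2 ≤ (1 + ε / 2) * I.SW v μ' :=
    calc ∑ e ∈ B, v e.1 e.2 ≤ ∑ e ∈ B, (1 + ε / 2) * w e :=
          Finset.sum_le_sum fun e he => hvw e (hBmem e he) (Finset.mem_filter.1 he).2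
      _ = (1 + ε / 2) * ∑ e ∈ B, w e := by rw [Finset.mul_sum]
      _ ≤ _ := mul_le_mul_of_nonneg_left hwB (by linarith)
  set Q := I.SW v μ'
  have hcardR : (B.card : ℝ) + L.card ≤ n := by exact_mod_cast hcard
  suffices hgoal : L.card * T ≤ ε / 2 * Q by linarith
  rcases Nat.lt_or_ge B.card 2 with hb | hb
  · interval_cases hBc : B.card
    · -- No large edge: the welfare would be below `1`.
      exfalso
      have hB0 : B = ∅ := Finset.card_eq_zero.1 hBc
      rw [hB0, Finset.sum_empty, zero_add] at hsplit
      have hLne : L.Nonempty := by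
        rw [Finset.nonempty_iff_ne_empty]
        intro h0
        rw [h0, Finset.sum_empty] at hsplit
        linarith
      have hlt : ∑ e ∈ L, v e.1 e.2 < L.card * T := by
        rw [← nsmul_eq_mul, ← Finset.sum_const]
        exact Finset.sum_lt_sum_of_nonempty hLne
          fun e he => not_le.1 (Finset.mem_filter.1 he).2
      have hLn : L.card * T ≤ n * T := mul_le_mul_of_nonneg_right (by simpa using hcardR) hT0.le
      rcases Nat.lt_or_ge n 2 with h2 | h2
      · obtain rfl : n = 1 := by omega
        norm_num at hLn
        linarith
      · have h2R : (2 : ℝ) ≤ n := by exact_mod_cast h2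
        nlinarith [mul_le_mul_of_nonneg_right h2R (mul_nonneg (by linarith : (0 : ℝ) ≤ n) hT0.le)]
    · -- A single large edge: it is rounded to the first threshold.
      obtain ⟨⟨i, h⟩, hBe⟩ := Finset.card_eq_one.1 hBc
      have hLT : 4 * (L.card * T) ≤ ε := by
        push_cast at hcardR
        nlinarith [mul_nonneg hT0.le (sq_nonneg ((n : ℝ) - 2)),
          mul_le_mul_of_nonneg_right hcardR hT0.le]
      have hx : 1 - ε / 4 ≤ v i h := by
        rw [hBe, Finset.sum_singleton] at hsplit
        dsimp only at hsplit
        linarith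
      have hxq : 2 / (2 + ε) ≤ v i h := by
        refine le_trans ?_ hx
        rw [div_le_iff₀ (by positivity)]
        nlinarith
      have heB : (i, h) ∈ B := by simp [hBe]
      have hwe : w (i, h) = 2 / (2 + ε) := by
        rcases hw i h (hBmem _ heB) with ⟨k, hk1, -, -, hk, hk'⟩ | ⟨hlt, -⟩
        · rcases hk with rfl | hk
          · simpa using hk'
          · by_cases hk2 : k = 1
            · subst hk2
              simpa using hk'
            · have : (2 / (2 + ε)) ^ (k - 1) ≤ 2 / (2 + ε) :=
                pow_le_of_le_one hq0.le hq1 (by omega)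
              linarith
        · exact absurd hlt (not_lt.2 (Finset.mem_filter.1 heB).2)
      rw [hBe, Finset.sum_singleton, hwe] at hwB
      have hhalf : 1 / 2 ≤ 2 / (2 + ε) := by
        rw [div_le_div_iff₀ (by norm_num) (by positivity)]
        linarith
      nlinarith
  · have hbR : (2 : ℝ) ≤ B.card := by exact_mod_cast hb
    have hLT : 6 * (L.card * T) ≤ ε := by
      nlinarith [mul_nonneg hT0.le (sq_nonneg ((n : ℝ) - 3)),
        mul_le_mul_of_nonneg_right (by linarith : (L.card : ℝ) ≤ n - 2) hT0.le]
    nlinarith [mul_nonneg hε.le (by linarith : 0 ≤ (1 + ε / 2) * Q - (1 - L.card * T))]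

end OSMInstance

/-- every Pareto optimal matching whose welfare is at least that of the
maximum-weight matching under the rounded weights is a `(1+ε)`-approximation to the
optimal welfare among Pareto optimal matchings. -/
theorem adaptive_approx_paretoOptimal {n : ℕ} (I : OSMInstance n)
    (ε : ℝ) (hε : 0 < ε) (hε2 : ε ≤ 2)
    (v : Fin n → Fin n → ℝ) (hv : I.Consistent v)
    (hvval : I.UnitSum v ∨ I.UnitRange v)
    (c : ℕ) (hc : c = ⌈Real.log ((n : ℝ) ^ 2 * (1 / ε)) / Real.log (1 + ε / 2)⌉₊)
    (t : ℕ → ℝ) (ht : ∀ k, t k = (2 / (2 + ε)) ^ k)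
    (val' : Fin n × Fin n → ℝ)
    (hval' : ∀ i h, h ∈ I.accept i →
      (∃ k, 1 ≤ k ∧ k ≤ c ∧ t k ≤ v i h ∧ (k = 1 ∨ v i h < t (k - 1)) ∧
        val' (i, h) = t k) ∨
      (v i h < t c ∧ val' (i, h) = 0))
    (μ' : Finset (Fin n × Fin n)) (hμ' : I.IsMaxWeightMatching (fun e => val' e) μ')
    (μ : Finset (Fin n × Fin n)) (hμ : I.ParetoOptimal μ)
    (hge : I.SW v μ' ≤ I.SW v μ)
    (μstar : Finset (Fin n × Fin n)) (hstar : I.ParetoOptimal μstar)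
    (hstaropt : ∀ μ'', I.ParetoOptimal μ'' → I.SW v μ'' ≤ I.SW v μstar) :
    I.SW v μstar ≤ (1 + ε) * I.SW v μ := by
  have hSW : 0 ≤ I.SW v μ := Finset.sum_nonneg fun e _ => (hv.1 e.1 e.2).1
  rcases Nat.eq_zero_or_pos n with rfl | hn
  · have hempty : μstar = ∅ := Finset.eq_empty_of_forall_notMem fun e => e.1.elim0
    rw [hempty, OSMInstance.SW, Finset.sum_empty]
    positivity
  · obtain rfl : t = fun k => (2 / (2 + ε)) ^ k := funext ht
    have happrox : ∀ M, I.IsMatching M → 1 ≤ I.SW v M → I.SW v M ≤ (1 + ε) * I.SW v μ :=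
      fun M hM hone =>
        (I.SW_le_of_isMaxWeightMatching hn hε hε2 hv (hc ▸ sq_mul_threshold_le hn hε) hval'
          hμ' hM hone).trans (mul_le_mul_of_nonneg_left hge (by linarith))
    obtain ⟨M, hM, hone⟩ : ∃ M, I.IsMatching M ∧ 1 ≤ I.SW v M :=
      hvval.elim (I.exists_matching_one_le_SW_of_unitSum hn hv)
        (I.exists_matching_one_le_SW_of_unitRange hn)
    rcases le_total 1 (I.SW v μstar) with h | h
    · exact happrox μstar hstar.1 h
    · exact (h.trans hone).trans (happrox M hM hone)
end
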